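/- Let (P, h, c) be presentation data over a field K. Then there exists presentation data (P', h', c') over K that is minimal — i.e., it satisfies the support condition, is column-minimal, and D'^z = 0 for every z ∈ ℤ² — together with a family of linear isomorphisms φ_z : M_z → M'_z (z ∈ ℤ²) commuting with the structure maps, i.e., φ_z ∘ (M_{z'} → M_z) = (M'_{z'} → M'_z) ∘ φ_{z'} for all z' ≤ z. (Every finitely presented 2-parameter persistence module admits a minimal presentation; the algorithm MinimizePres produces one from a semi-minimal presentation.) -/

import Mathlib

/-!
A presentation that is not minimal can be shrunk by one column, without changing the module it
presents, so induction on the number of columns gives the theorem.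

* If the presentation is not column-minimal, some column lies in the span of the other columns
  with labels below its own. Deleting it changes none of the spaces `C_z`
  (`PresMap.deleteColumn`).
* If `h i₀ = c j₀` and `P i₀ j₀ ≠ 0`, the relation `j₀` expresses the generator `i₀` through the
  others. Eliminating the generator deletes row `i₀` and column `j₀` and replaces `P` by its Schur
  complement at the pivot (`PresMap.eliminate`). Since `i₀` and `j₀` sit at the same grade, the
  relation `j₀` is available wherever the generator `i₀` is, so no class is lost.

Both steps are induced by one linear map of the ambient spaces, independent of the grade. Such
maps (`PresMap`) compose, and each induces isomorphisms `M_z ≃ M'_z` commuting with the structure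
maps (`PresMap.exists_equiv`).
-/

/-- The grade-`z` piece `W_z = span{e_i : h_i ≤ z} ⊆ K^m` of the free module with
generators at grades `h_1, …, h_m`. -/
def Wspace (K : Type*) [Field K] {m : ℕ} (h : Fin m → ℤ × ℤ) (z : ℤ × ℤ) :
    Submodule K (Fin m → K) :=
  Submodule.span K {v : Fin m → K | ∃ i : Fin m, h i ≤ z ∧ v = Pi.single i 1}

/-- The grade-`z` piece `C_z = span{P(*,j) : c_j ≤ z} ⊆ K^m` of the submodule generated
by the columns of `P` with labels `c_1, …, c_n`. -/
def Cspace {K : Type*} [Field K] {m n : ℕ} (P : Matrix (Fin m) (Fin n) K)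
    (c : Fin n → ℤ × ℤ) (z : ℤ × ℤ) : Submodule K (Fin m → K) :=
  Submodule.span K {v : Fin m → K | ∃ j : Fin n, c j ≤ z ∧ v = fun i => P i j}

theorem Wspace_mono (K : Type*) [Field K] {m : ℕ} (h : Fin m → ℤ × ℤ)
    {z' z : ℤ × ℤ} (hz : z' ≤ z) : Wspace K h z' ≤ Wspace K h z :=
  Submodule.span_mono fun v hv => by
    obtain ⟨i, hi, rfl⟩ := hv
    exact ⟨i, hi.trans hz, rfl⟩

theorem Cspace_mono {K : Type*} [Field K] {m n : ℕ} (P : Matrix (Fin m) (Fin n) K)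
    (c : Fin n → ℤ × ℤ) {z' z : ℤ × ℤ} (hz : z' ≤ z) : Cspace P c z' ≤ Cspace P c z :=
  Submodule.span_mono fun v hv => by
    obtain ⟨j, hj, rfl⟩ := hv
    exact ⟨j, hj.trans hz, rfl⟩

/-- The grade-`z` piece `M_z = W_z / C_z` of the module presented by the presentation
data `(P, h, c)`, realized as the image of `W_z` in `K^m ⧸ C_z`. -/
noncomputable def Mmod {K : Type*} [Field K] {m n : ℕ} (P : Matrix (Fin m) (Fin n) K)
    (h : Fin m → ℤ × ℤ) (c : Fin n → ℤ × ℤ) (z : ℤ × ℤ) :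
    Submodule K ((Fin m → K) ⧸ Cspace P c z) :=
  (Wspace K h z).map (Cspace P c z).mkQ

/-- The structure map `M_{z'} → M_z` induced by the inclusion `W_{z'} ⊆ W_z`. -/
noncomputable def structMap {K : Type*} [Field K] {m n : ℕ} (P : Matrix (Fin m) (Fin n) K)
    (h : Fin m → ℤ × ℤ) (c : Fin n → ℤ × ℤ) {z' z : ℤ × ℤ} (hz : z' ≤ z) :
    Mmod P h c z' →ₗ[K] Mmod P h c z :=
  LinearMap.restrict
    (Submodule.mapQ (Cspace P c z') (Cspace P c z) LinearMap.id
      (by simpa using Cspace_mono P c hz))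
    (fun x hx => by
      obtain ⟨w, hw, rfl⟩ := hx
      exact ⟨w, Wspace_mono K h hz hw, by simp [Submodule.mapQ_apply]⟩)

/-- The presentation data `(P, h, c)` is column-minimal (semi-minimal) if for every
grade `z` the columns of `P` with label `z` are linearly independent modulo the span of
the columns with label `≤ z` but `≠ z`. -/
def ColumnMinimal {K : Type*} [Field K] {m n : ℕ} (P : Matrix (Fin m) (Fin n) K)
    (c : Fin n → ℤ × ℤ) : Prop :=
  ∀ z : ℤ × ℤ, LinearIndependent K
    (fun j : {j : Fin n // c j = z} =>
      Submodule.Quotient.mk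
        (p := Submodule.span K
          {v : Fin m → K | ∃ j' : Fin n, c j' ≤ z ∧ c j' ≠ z ∧ v = fun i => P i j'})
        (fun i => P i j.1))

/-- The submatrix `D^z` of `P` on the rows with label `z` and columns with label `z`. -/
def Dsub {K : Type*} [Field K] {m n : ℕ} (P : Matrix (Fin m) (Fin n) K)
    (h : Fin m → ℤ × ℤ) (c : Fin n → ℤ × ℤ) (z : ℤ × ℤ) :
    Matrix {i : Fin m // h i = z} {j : Fin n // c j = z} K :=
  Matrix.of fun i j => P i.1 j.1

/-- A linear map `f : K^m → K^m'` that identifies the modules presented by `(P, h, c)` and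
`(P', h', c')`: in every grade `f` maps `W_z` onto `W'_z` and `C_z` into `C'_z`, and a vector of
`W_z` whose image lies in `C'_z` already lies in `C_z`. -/
structure PresMap {K : Type*} [Field K] {m n m' n' : ℕ}
    (P : Matrix (Fin m) (Fin n) K) (h : Fin m → ℤ × ℤ) (c : Fin n → ℤ × ℤ)
    (P' : Matrix (Fin m') (Fin n') K) (h' : Fin m' → ℤ × ℤ) (c' : Fin n' → ℤ × ℤ)
    (f : (Fin m → K) →ₗ[K] (Fin m' → K)) : Prop where
  map_W : ∀ z, (Wspace K h z).map f = Wspace K h' z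
  C_le : ∀ z, Cspace P c z ≤ (Cspace P' c' z).comap f
  mem_C : ∀ z, ∀ v ∈ Wspace K h z, f v ∈ Cspace P' c' z → v ∈ Cspace P c z

theorem PresMap.id {K : Type*} [Field K] {m n : ℕ}
    (P : Matrix (Fin m) (Fin n) K) (h : Fin m → ℤ × ℤ) (c : Fin n → ℤ × ℤ) :
    PresMap P h c P h c LinearMap.id :=
  ⟨fun _ => Submodule.map_id _, fun _ _ hv => hv, fun _ _ _ hv => hv⟩

theorem PresMap.comp {K : Type*} [Field K] {m n m' n' m'' n'' : ℕ}
    {P : Matrix (Fin m) (Fin n) K} {h : Fin m → ℤ × ℤ} {c : Fin n → ℤ × ℤ}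
    {P' : Matrix (Fin m') (Fin n') K} {h' : Fin m' → ℤ × ℤ} {c' : Fin n' → ℤ × ℤ}
    {P'' : Matrix (Fin m'') (Fin n'') K} {h'' : Fin m'' → ℤ × ℤ} {c'' : Fin n'' → ℤ × ℤ}
    {f : (Fin m → K) →ₗ[K] (Fin m' → K)} {g : (Fin m' → K) →ₗ[K] (Fin m'' → K)}
    (hg : PresMap P' h' c' P'' h'' c'' g) (hf : PresMap P h c P' h' c' f) :
    PresMap P h c P'' h'' c'' (g ∘ₗ f) where
  map_W z := by rw [Submodule.map_comp, hf.map_W, hg.map_W]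
  C_le z _ hv := hg.C_le z (hf.C_le z hv)
  mem_C z v hv hgf := by
    refine hf.mem_C z v hv (hg.mem_C z _ ?_ hgf)
    rw [← hf.map_W]
    exact Submodule.mem_map_of_mem hv

theorem PresMap.exists_equiv {K : Type*} [Field K] {m n m' n' : ℕ}
    {P : Matrix (Fin m) (Fin n) K} {h : Fin m → ℤ × ℤ} {c : Fin n → ℤ × ℤ}
    {P' : Matrix (Fin m') (Fin n') K} {h' : Fin m' → ℤ × ℤ} {c' : Fin n' → ℤ × ℤ}
    {f : (Fin m → K) →ₗ[K] (Fin m' → K)} (hf : PresMap P h c P' h' c' f) :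
    ∃ φ : ∀ z : ℤ × ℤ, ↥(Mmod P h c z) ≃ₗ[K] ↥(Mmod P' h' c' z),
      ∀ (z' z : ℤ × ℤ) (hz : z' ≤ z) (x : ↥(Mmod P h c z')),
        φ z (structMap P h c hz x) = structMap P' h' c' hz (φ z' x) := by
  have hmaps : ∀ z, ∀ x ∈ Mmod P h c z,
      Submodule.mapQ _ _ f (hf.C_le z) x ∈ Mmod P' h' c' z := by
    rintro z _ ⟨w, hw, rfl⟩
    refine ⟨f w, ?_, by simp⟩
    rw [SetLike.mem_coe, ← hf.map_W]
    exact Submodule.mem_map_of_mem hw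
  have hbij : ∀ z, Function.Bijective
      (LinearMap.restrict (Submodule.mapQ _ _ f (hf.C_le z)) (hmaps z)) := by
    intro z
    constructor
    · rw [injective_iff_map_eq_zero]
      rintro ⟨_, w, hw, rfl⟩ hx
      have hx' := congrArg Subtype.val hx
      simp only [LinearMap.coe_restrict_apply, Submodule.mkQ_apply, Submodule.mapQ_apply,
        ZeroMemClass.coe_zero, Submodule.Quotient.mk_eq_zero] at hx'
      apply Subtype.ext
      simpa using hf.mem_C z w hw hx'
    · rintro ⟨_, w, hw, rfl⟩
      rw [SetLike.mem_coe, ← hf.map_W] at hw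
      obtain ⟨v, hv, rfl⟩ := hw
      exact ⟨⟨_, v, hv, rfl⟩, Subtype.ext (by simp)⟩
  refine ⟨fun z => LinearEquiv.ofBijective _ (hbij z), ?_⟩
  rintro z' z hz ⟨_, w, hw, rfl⟩
  apply Subtype.ext
  simp [structMap]

theorem mem_Wspace_iff {K : Type*} [Field K] {m : ℕ} {h : Fin m → ℤ × ℤ} {z : ℤ × ℤ}
    {v : Fin m → K} : v ∈ Wspace K h z ↔ ∀ i, v i ≠ 0 → h i ≤ z := by
  constructor
  · intro hv
    induction hv using Submodule.span_induction with
    | mem x hx =>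
      obtain ⟨i, hi, rfl⟩ := hx
      intro k hk
      by_cases hki : k = i
      · exact hki ▸ hi
      · exact absurd (Pi.single_eq_of_ne hki _) hk
    | zero => intro i hi; exact absurd rfl hi
    | add x y _ _ hx hy =>
      intro i hi
      by_cases hxi : x i = 0
      · exact hy i fun hyi => hi (by simp [hxi, hyi])
      · exact hx i hxi
    | smul a x _ hx => exact fun i hi => hx i fun hxi => hi (by simp [hxi])
  · intro hv
    rw [pi_eq_sum_univ' v]
    refine Submodule.sum_mem _ fun i _ => ?_
    by_cases hi : v i = 0
    · simp [hi]
    · refine Submodule.smul_mem _ _ (Submodule.subset_span ⟨i, hv i hi, ?_⟩)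
      ext k
      simp [Pi.single_apply]

theorem Cspace_le_Wspace {K : Type*} [Field K] {m n : ℕ} {P : Matrix (Fin m) (Fin n) K}
    {h : Fin m → ℤ × ℤ} {c : Fin n → ℤ × ℤ}
    (hsupp : ∀ (i : Fin m) (j : Fin n), P i j ≠ 0 → h i ≤ c j) (z : ℤ × ℤ) :
    Cspace P c z ≤ Wspace K h z := by
  refine Submodule.span_le.2 ?_
  rintro _ ⟨j, hj, rfl⟩
  exact mem_Wspace_iff.2 fun i hi => (hsupp i j hi).trans hj

theorem exists_redundant_column {K : Type*} [Field K] {m n : ℕ}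
    {P : Matrix (Fin m) (Fin (n + 1)) K} {c : Fin (n + 1) → ℤ × ℤ}
    (hP : ¬ ColumnMinimal P c) :
    ∃ j₀, (fun i => P i j₀) ∈
      Cspace (fun i j => P i (j₀.succAbove j)) (fun j => c (j₀.succAbove j)) (c j₀) := by
  unfold ColumnMinimal at hP
  push Not at hP
  obtain ⟨z, hz⟩ := hP
  rw [linearIndependent_iff_notMem_span] at hz
  push Not at hz
  obtain ⟨⟨j₀, rfl⟩, hj⟩ := hz
  refine ⟨j₀, ?_⟩
  -- Every column other than `j₀` with label below `c j₀` survives the deletion of `j₀`.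
  have hgen : ∀ j, j ≠ j₀ → c j ≤ c j₀ → (fun i => P i j) ∈
      Cspace (fun i j => P i (j₀.succAbove j)) (fun j => c (j₀.succAbove j)) (c j₀) := by
    intro j hne hle
    obtain ⟨k, rfl⟩ := Fin.exists_succAbove_eq hne
    exact Submodule.subset_span ⟨k, hle, rfl⟩
  have hN : Submodule.span K
      {v : Fin m → K | ∃ j' : Fin (n + 1), c j' ≤ c j₀ ∧ c j' ≠ c j₀ ∧ v = fun i => P i j'} ≤
      Cspace (fun i j => P i (j₀.succAbove j)) (fun j => c (j₀.succAbove j)) (c j₀) := by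
    refine Submodule.span_le.2 ?_
    rintro _ ⟨j, hle, hne, rfl⟩
    exact hgen j (fun he => hne (he ▸ rfl)) hle
  obtain ⟨w, hw, hwe⟩ := (Submodule.span_le (p := (Cspace (fun i j => P i (j₀.succAbove j))
      (fun j => c (j₀.succAbove j)) (c j₀)).map (Submodule.mkQ (Submodule.span K
        {v : Fin m → K | ∃ j' : Fin (n + 1), c j' ≤ c j₀ ∧ c j' ≠ c j₀ ∧
          v = fun i => P i j'})))).2 (by
    rintro _ ⟨⟨j, hjc⟩, ⟨-, hne⟩, rfl⟩
    exact ⟨_, hgen j (fun he => hne (Subtype.ext he)) hjc.le, rfl⟩) hj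
  have hsub := hN ((Submodule.Quotient.eq _).1 hwe)
  simpa using Submodule.sub_mem _ hw hsub

theorem PresMap.deleteColumn {K : Type*} [Field K] {m n : ℕ}
    {P : Matrix (Fin m) (Fin (n + 1)) K} {h : Fin m → ℤ × ℤ} {c : Fin (n + 1) → ℤ × ℤ}
    {j₀ : Fin (n + 1)}
    (hj₀ : (fun i => P i j₀) ∈
      Cspace (fun i j => P i (j₀.succAbove j)) (fun j => c (j₀.succAbove j)) (c j₀)) :
    PresMap P h c (fun i j => P i (j₀.succAbove j)) h (fun j => c (j₀.succAbove j))
      LinearMap.id where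
  map_W z := Submodule.map_id _
  C_le z := by
    refine Submodule.span_le.2 ?_
    rintro _ ⟨j, hj, rfl⟩
    rcases Fin.eq_self_or_eq_succAbove j₀ j with rfl | ⟨k, rfl⟩
    · exact Cspace_mono _ _ hj hj₀
    · exact Submodule.subset_span ⟨k, hj, rfl⟩
  mem_C z v _ hv := by
    refine Submodule.span_mono ?_ hv
    rintro _ ⟨j, hj, rfl⟩
    exact ⟨_, hj, rfl⟩

/-- The map `K^(m+1) → K^m` that eliminates coordinate `i₀` using the vector `p`: the projection
along `p` onto the coordinates other than `i₀`, assuming `p i₀ ≠ 0`. -/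
def elimMap {K : Type*} [Field K] {m : ℕ} (i₀ : Fin (m + 1)) (p : Fin (m + 1) → K) :
    (Fin (m + 1) → K) →ₗ[K] (Fin m → K) where
  toFun v i := v (i₀.succAbove i) - v i₀ * (p (i₀.succAbove i) / p i₀)
  map_add' v w := by ext i; simp only [Pi.add_apply]; ring
  map_smul' a v := by ext i; simp only [Pi.smul_apply, smul_eq_mul, RingHom.id_apply]; ring

theorem elimMap_apply {K : Type*} [Field K] {m : ℕ} (i₀ : Fin (m + 1)) (p v : Fin (m + 1) → K)
    (i : Fin m) :
    elimMap i₀ p v i = v (i₀.succAbove i) - v i₀ * (p (i₀.succAbove i) / p i₀) := rfl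

theorem elimMap_self {K : Type*} [Field K] {m : ℕ} {i₀ : Fin (m + 1)} {p : Fin (m + 1) → K}
    (hp : p i₀ ≠ 0) : elimMap i₀ p p = 0 := by
  ext i
  rw [elimMap_apply, mul_div_cancel₀ _ hp]
  simp

theorem eq_smul_of_elimMap_eq_zero {K : Type*} [Field K] {m : ℕ} {i₀ : Fin (m + 1)}
    {p v : Fin (m + 1) → K} (hp : p i₀ ≠ 0) (hv : elimMap i₀ p v = 0) :
    v = (v i₀ / p i₀) • p := by
  ext i
  rcases Fin.eq_self_or_eq_succAbove i₀ i with rfl | ⟨k, rfl⟩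
  · simp [hp]
  · have hk := congrFun hv k
    rw [elimMap_apply, Pi.zero_apply, sub_eq_zero] at hk
    rw [hk, Pi.smul_apply, smul_eq_mul]
    ring

/-- If `h i ≤ h i₀` on the support of `p`, eliminating `i₀` along `p` respects supports in each
grade. Besides the invariance of `W_z`, this gives the support condition for the eliminated
matrix. -/
theorem elimMap_mem_Wspace {K : Type*} [Field K] {m : ℕ} {i₀ : Fin (m + 1)}
    {p v : Fin (m + 1) → K} {h : Fin (m + 1) → ℤ × ℤ} {z : ℤ × ℤ}
    (hp : ∀ i, p i ≠ 0 → h i ≤ h i₀) (hv : v ∈ Wspace K h z) :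
    elimMap i₀ p v ∈ Wspace K (fun i => h (i₀.succAbove i)) z := by
  rw [mem_Wspace_iff] at hv ⊢
  intro i hi
  rw [elimMap_apply] at hi
  by_cases h1 : v (i₀.succAbove i) = 0
  · by_cases h2 : v i₀ = 0
    · simp [h1, h2] at hi
    · refine (hp _ fun h3 => ?_).trans (hv i₀ h2)
      simp [h1, h3] at hi
  · exact hv _ h1

theorem PresMap.eliminate {K : Type*} [Field K] {m n : ℕ}
    {P : Matrix (Fin (m + 1)) (Fin (n + 1)) K}
    {h : Fin (m + 1) → ℤ × ℤ} {c : Fin (n + 1) → ℤ × ℤ}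
    (hsupp : ∀ i j, P i j ≠ 0 → h i ≤ c j)
    {i₀ : Fin (m + 1)} {j₀ : Fin (n + 1)} (hc : h i₀ = c j₀) (hne : P i₀ j₀ ≠ 0) :
    PresMap P h c
      (fun i j => elimMap i₀ (fun k => P k j₀) (fun k => P k (j₀.succAbove j)) i)
      (fun i => h (i₀.succAbove i)) (fun j => c (j₀.succAbove j))
      (elimMap i₀ (fun k => P k j₀)) where
  map_W z := by
    refine le_antisymm ?_ ?_
    · rintro _ ⟨v, hv, rfl⟩
      exact elimMap_mem_Wspace (fun i hi => hc ▸ hsupp i j₀ hi) hv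
    · intro w hw
      refine ⟨i₀.insertNth 0 w, mem_Wspace_iff.2 fun i hi => ?_, ?_⟩
      · rcases Fin.eq_self_or_eq_succAbove i₀ i with rfl | ⟨k, rfl⟩
        · simp at hi
        · exact mem_Wspace_iff.1 hw k (by simpa using hi)
      · ext i
        simp [elimMap_apply]
  C_le z := by
    refine Submodule.span_le.2 ?_
    rintro _ ⟨j, hj, rfl⟩
    rcases Fin.eq_self_or_eq_succAbove j₀ j with rfl | ⟨k, rfl⟩
    · rw [SetLike.mem_coe, Submodule.mem_comap, elimMap_self (p := fun k => P k j) hne]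
      exact Submodule.zero_mem _
    · exact Submodule.subset_span ⟨k, hj, rfl⟩
  mem_C z v hv hfv := by
    have hle : Cspace
        (fun i j => elimMap i₀ (fun k => P k j₀) (fun k => P k (j₀.succAbove j)) i)
        (fun j => c (j₀.succAbove j)) z ≤
        (Cspace P c z).map (elimMap i₀ (fun k => P k j₀)) := by
      refine Submodule.span_le.2 ?_
      rintro _ ⟨j, hj, rfl⟩
      exact ⟨_, Submodule.subset_span ⟨_, hj, rfl⟩, rfl⟩
    obtain ⟨u, hu, hue⟩ := hle hfv
    -- `v - u` is a multiple of column `j₀`, and a nonzero multiple forces `c j₀ = h i₀ ≤ z`.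
    have hker := eq_smul_of_elimMap_eq_zero (v := v - u) hne (by rw [map_sub, hue, sub_self])
    have hW : v - u ∈ Wspace K h z :=
      Submodule.sub_mem _ hv (Cspace_le_Wspace hsupp z hu)
    have hC : v - u ∈ Cspace P c z := by
      by_cases h0 : (v - u) i₀ = 0
      · rw [hker, h0]
        simp
      · rw [hker]
        exact Submodule.smul_mem _ _
          (Submodule.subset_span ⟨j₀, hc ▸ mem_Wspace_iff.1 hW i₀ h0, rfl⟩)
    simpa using Submodule.add_mem _ hC hu

theorem exists_minimal_presMap {K : Type*} [Field K] (n : ℕ) : ∀ {m : ℕ}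
    (P : Matrix (Fin m) (Fin n) K) (h : Fin m → ℤ × ℤ) (c : Fin n → ℤ × ℤ)
    (_ : ∀ (i : Fin m) (j : Fin n), P i j ≠ 0 → h i ≤ c j),
    ∃ (m' n' : ℕ) (P' : Matrix (Fin m') (Fin n') K)
      (h' : Fin m' → ℤ × ℤ) (c' : Fin n' → ℤ × ℤ),
      (∀ (i : Fin m') (j : Fin n'), P' i j ≠ 0 → h' i ≤ c' j) ∧
      ColumnMinimal P' c' ∧
      (∀ (i : Fin m') (j : Fin n'), h' i = c' j → P' i j = 0) ∧
      ∃ f, PresMap P h c P' h' c' f := by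
  induction n with
  | zero =>
    intro m P h c hsupp
    refine ⟨m, 0, P, h, c, hsupp, fun z => ?_, fun _ j => j.elim0, _, PresMap.id P h c⟩
    have : IsEmpty {j : Fin 0 // c j = z} := ⟨fun j => j.1.elim0⟩
    exact linearIndependent_empty_type
  | succ n ih =>
    intro m P h c hsupp
    by_cases hmin : ColumnMinimal P c
    · by_cases hD : ∀ i j, h i = c j → P i j = 0
      · exact ⟨m, n + 1, P, h, c, hsupp, hmin, hD, _, PresMap.id P h c⟩
      · push Not at hD
        obtain ⟨i₀, j₀, hc, hne⟩ := hD
        cases m with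
        | zero => exact i₀.elim0
        | succ m =>
          obtain ⟨m', n', P', h', c', hs, hm, hd, f, hf⟩ := ih
            (fun i j => elimMap i₀ (fun k => P k j₀) (fun k => P k (j₀.succAbove j)) i)
            (fun i => h (i₀.succAbove i)) (fun j => c (j₀.succAbove j))
            (fun i j hij => mem_Wspace_iff.1 (elimMap_mem_Wspace
              (fun k hk => hc ▸ hsupp k j₀ hk)
              (mem_Wspace_iff.2 fun k hk => hsupp k (j₀.succAbove j) hk)) i hij)
          exact ⟨m', n', P', h', c', hs, hm, hd, _, hf.comp (PresMap.eliminate hsupp hc hne)⟩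
    · obtain ⟨j₀, hj₀⟩ := exists_redundant_column hmin
      obtain ⟨m', n', P', h', c', hs, hm, hd, f, hf⟩ := ih
        (fun i j => P i (j₀.succAbove j)) h (fun j => c (j₀.succAbove j))
        (fun i j => hsupp i (j₀.succAbove j))
      exact ⟨m', n', P', h', c', hs, hm, hd, _, hf.comp (PresMap.deleteColumn hj₀)⟩

/-- Every finitely presented 2-parameter persistence module admits a minimal
presentation: given presentation data `(P, h, c)`, there is presentation data
`(P', h', c')` which is column-minimal and has `D'^z = 0` for every `z` (i.e. `P' i j = 0`
whenever `h' i = c' j`), presenting an isomorphic module — there are isomorphisms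
`φ_z : M_z ≃ M'_z` commuting with the structure maps.  (The algorithm `MinimizePres`
produces such a minimal presentation from a semi-minimal one.) -/
theorem exists_minimal_presentation {K : Type*} [Field K] {m n : ℕ}
    (P : Matrix (Fin m) (Fin n) K) (h : Fin m → ℤ × ℤ) (c : Fin n → ℤ × ℤ)
    (hsupp : ∀ (i : Fin m) (j : Fin n), P i j ≠ 0 → h i ≤ c j) :
    ∃ (m' n' : ℕ) (P' : Matrix (Fin m') (Fin n') K)
      (h' : Fin m' → ℤ × ℤ) (c' : Fin n' → ℤ × ℤ),
      (∀ (i : Fin m') (j : Fin n'), P' i j ≠ 0 → h' i ≤ c' j) ∧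
      ColumnMinimal P' c' ∧
      (∀ (i : Fin m') (j : Fin n'), h' i = c' j → P' i j = 0) ∧
      ∃ φ : ∀ z : ℤ × ℤ, ↥(Mmod P h c z) ≃ₗ[K] ↥(Mmod P' h' c' z),
        ∀ (z' z : ℤ × ℤ) (hz : z' ≤ z) (x : ↥(Mmod P h c z')),
          φ z (structMap P h c hz x) = structMap P' h' c' hz (φ z' x) := by
  obtain ⟨m', n', P', h', c', hs, hm, hd, f, hf⟩ := exists_minimal_presMap n P h c hsupp
  exact ⟨m', n', P', h', c', hs, hm, hd, hf.exists_equiv⟩
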